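/- Let n ∈ ℕ, 0 < p < 1, q = 1 − p, and let Y ~ Bi(n,p). For any A ⊆ ℤ there exists a function g : ℤ → ℝ solving the Stein equation qzg(z−1) − p(n−z)g(z) = 1[0 ≤ z ≤ n](1[z ∈ A] − P[Y ∈ A]) for all z ∈ ℤ, which satisfies ‖g‖ ≤ min(1, (npq)^{−1/2}), where ‖·‖ is the supremum norm. -/

import Mathlib

/-!
Write `π k` for the binomial weights, `q = 1 - p`, `σ = √(npq)`, `G k = ∑_{j<k} π j`. Multiplying
the Stein equation by `π z` and using `q (k+1) π (k+1) = p (n-k) π k` turns it into a telescoping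
equation, whose solution is
`g k = -(∑_{j≤k} π j (1_A j - π(A))) / (q (k+1) π (k+1))` for `0 ≤ k < n`, and `g = 0` elsewhere.
The numerator is at most `G (k+1) (1 - G (k+1))` in absolute value, so it suffices to show
`s G k (1 - G k) ≤ q k π k` for `s = 1` and for `s = σ`.

The difference `E k = q k π k - s G k (1 - G k)` vanishes at `k = 0` and `k = n + 1`, and
`E (k+1) - E k = π k * c k` with `c k = np - k - s + s (G k + G (k+1))`. Since
`c (k+1) - c k = s (π k + π (k+1)) - 1`, the sequence `c` is antitone as soon as
`s (π k + π (k+1)) ≤ 1`; then `E` first increases and then decreases, hence `E ≥ 0`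
(`steinBinom_tail_le`).

For `s = 1` the condition is clear. For `s = σ` it follows from the local bound `2 σ π k ≤ 1`
(`steinBinom_weight_le`). There, `p ^ (k+1/2) q ^ (n-k+1/2)` is maximal at `p = (k+1/2)/(n+1)`, and
the resulting expression is controlled by `(k+1/2) ^ (k+1/2) e ^ (-k-1/2) ≤ k! / √(2e)`, by
`n! ≤ e √n (n/e)^n` and by `(1+1/n)^(n+1) ≥ e`.
-/

/-- The weight of `k` under `Bi(n,p)`. -/
noncomputable def steinBinomWeight (n : ℕ) (p : ℝ) (k : ℕ) : ℝ :=
  (n.choose k : ℝ) * p ^ k * (1 - p) ^ (n - k)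

lemma steinBinom_nonneg (n : ℕ) {p : ℝ} (hp : 0 < p) (hp1 : p < 1) (k : ℕ) :
    0 ≤ steinBinomWeight n p k := by
  have : 0 < 1 - p := by linarith
  unfold steinBinomWeight
  positivity

lemma steinBinom_pos (n : ℕ) {p : ℝ} (hp : 0 < p) (hp1 : p < 1) {k : ℕ} (hk : k ≤ n) :
    0 < steinBinomWeight n p k := by
  have : 0 < 1 - p := by linarith
  have h : (0 : ℝ) < n.choose k := by exact_mod_cast Nat.choose_pos hk
  unfold steinBinomWeight
  positivity

lemma steinBinom_sum (n : ℕ) (p : ℝ) :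
    ∑ k ∈ Finset.range (n + 1), steinBinomWeight n p k = 1 := by
  have h := add_pow p (1 - p) n
  rw [add_sub_cancel, one_pow] at h
  rw [h]
  refine Finset.sum_congr rfl fun k _ => ?_
  unfold steinBinomWeight
  ring

/-- Detailed balance for the binomial weights. -/
lemma steinBinom_succ (n : ℕ) (p : ℝ) (k : ℕ) :
    (1 - p) * ((k : ℝ) + 1) * steinBinomWeight n p (k + 1)
      = p * ((n : ℝ) - k) * steinBinomWeight n p k := by
  unfold steinBinomWeight
  rcases lt_trichotomy k n with h | h | h
  · obtain ⟨m, rfl⟩ := Nat.exists_eq_add_of_lt h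
    have h1 : ((k + m + 1).choose (k + 1) : ℝ) * (k + 1) = (k + m + 1).choose k * (m + 1) := by
      have := Nat.choose_succ_right_eq (k + m + 1) k
      rw [show k + m + 1 - k = m + 1 by omega] at this
      exact_mod_cast this
    rw [show k + m + 1 - (k + 1) = m by omega, show k + m + 1 - k = m + 1 by omega]
    push_cast
    linear_combination p ^ (k + 1) * (1 - p) ^ (m + 1) * h1
  · subst h
    simp
  · rw [Nat.choose_eq_zero_of_lt h, Nat.choose_eq_zero_of_lt (by omega)]
    simp

/-- This is `∫ log ≤ log m` over `[m - 1/2, m + 1/2]`, rescaled by `x = 1/(2m)`. -/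
lemma steinBinom_log_aux {x : ℝ} (hx0 : 0 ≤ x) (hx1 : x < 1) :
    (1 + x) * Real.log (1 + x) - (1 - x) * Real.log (1 - x) ≤ 2 * x := by
  let φ : ℝ → ℝ := fun x => (1 + x) * Real.log (1 + x) - (1 - x) * Real.log (1 - x) - 2 * x
  have hd : ∀ y ∈ Set.Ico (0 : ℝ) 1,
      HasDerivAt φ (Real.log (1 + y) + Real.log (1 - y)) y := by
    intro y hy
    have h1 : 1 + y ≠ 0 := by linarith [hy.1]
    have h2 : 1 - y ≠ 0 := by linarith [hy.2]
    have a1 : HasDerivAt (fun x : ℝ => 1 + x) 1 y := (hasDerivAt_id y).const_add 1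
    have a2 : HasDerivAt (fun x : ℝ => 1 - x) (-1) y := (hasDerivAt_id y).const_sub 1
    have := ((a1.mul (a1.log h1)).sub (a2.mul (a2.log h2))).sub ((hasDerivAt_id y).const_mul 2)
    refine this.congr_deriv ?_
    field_simp
    ring
  have hanti : AntitoneOn φ (Set.Ico 0 1) := by
    refine antitoneOn_of_deriv_nonpos (convex_Ico 0 1)
      (fun y hy => (hd y hy).continuousAt.continuousWithinAt)
      (fun y hy => ?_) (fun y hy => ?_)
    · exact (hd y (interior_subset hy)).differentiableAt.differentiableWithinAt
    · have hy' := interior_subset hy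
      rw [(hd y hy').deriv, ← Real.log_mul (by linarith [hy'.1]) (by linarith [hy'.2])]
      exact Real.log_nonpos (by nlinarith [hy'.1, hy'.2]) (by nlinarith [hy'.1])
  have := hanti (Set.left_mem_Ico.2 one_pos) ⟨hx0, hx1⟩ hx0
  simp only [φ] at this
  norm_num at this
  linarith

/-- `(k+1/2) ^ (k+1/2) e ^ (-k-1/2) ≤ k! / √(2e)`, with equality at `k = 0`: the ratio of the two
sides is antitone in `k`. -/
lemma steinBinom_factorial_lower (k : ℕ) :
    ((k : ℝ) + 1 / 2) * Real.log (k + 1 / 2) - (k + 1 / 2) - Real.log (k.factorial : ℝ)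
      ≤ -(Real.log 2 + 1) / 2 := by
  induction k with
  | zero =>
    have : Real.log (1 / 2) = - Real.log 2 := by rw [one_div, Real.log_inv]
    norm_num at this ⊢
    linarith
  | succ k ih =>
    have hm : (0 : ℝ) < k + 1 := by positivity
    set m : ℝ := (k : ℝ) + 1 with hmdef
    have hm1 : (1 : ℝ) ≤ m := by rw [hmdef]; linarith [(Nat.cast_nonneg k : (0 : ℝ) ≤ k)]
    have hx : 1 / (2 * m) < 1 := by rw [div_lt_one (by positivity)]; linarith
    have haux := steinBinom_log_aux (x := 1 / (2 * m)) (by positivity) hx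
    have hf : Real.log ((k + 1).factorial : ℝ) = Real.log m + Real.log (k.factorial : ℝ) := by
      rw [Nat.factorial_succ]
      push_cast
      rw [Real.log_mul hm.ne' (by positivity)]
    have e1 : Real.log (m + 1 / 2) = Real.log m + Real.log (1 + 1 / (2 * m)) := by
      rw [← Real.log_mul hm.ne' (by positivity)]
      congr 1
      field_simp
    have e2 : Real.log (k + 1 / 2) = Real.log m + Real.log (1 - 1 / (2 * m)) := by
      rw [← Real.log_mul hm.ne' (by linarith)]
      congr 1
      field_simp
      rw [hmdef]
      ring
    have hscaled := mul_le_mul_of_nonneg_left haux hm.le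
    have e3 : m * (2 * (1 / (2 * m))) = 1 := by field_simp
    have e4 : m * ((1 + 1 / (2 * m)) * Real.log (1 + 1 / (2 * m))
        - (1 - 1 / (2 * m)) * Real.log (1 - 1 / (2 * m)))
        = (m + 1 / 2) * Real.log (1 + 1 / (2 * m))
          - (m - 1 / 2) * Real.log (1 - 1 / (2 * m)) := by
      field_simp
    rw [e3, e4] at hscaled
    have hk : (k : ℝ) = m - 1 := by rw [hmdef]; ring
    rw [e2] at ih
    push_cast
    rw [← hmdef, hf, e1]
    rw [hk] at ih
    linarith

/-- `n! ≤ e √n (n/e)^n`. -/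
lemma steinBinom_factorial_upper {n : ℕ} (hn : 1 ≤ n) :
    Real.log (n.factorial : ℝ) ≤ 1 + Real.log n / 2 + n * Real.log n - n := by
  obtain ⟨m, rfl⟩ := Nat.exists_eq_add_of_le' hn
  have h : Stirling.stirlingSeq (m + 1) ≤ Stirling.stirlingSeq 1 :=
    Stirling.stirlingSeq'_antitone (Nat.zero_le m)
  have hl := Real.log_le_log (Stirling.stirlingSeq'_pos m) h
  have hm : ((m + 1 : ℕ) : ℝ) ≠ 0 := by positivity
  rw [Stirling.log_stirlingSeq_formula, Stirling.log_stirlingSeq_formula,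
    Real.log_mul two_ne_zero hm, Real.log_div hm (Real.exp_ne_zero _), Real.log_exp] at hl
  norm_num at hl
  push_cast at hl ⊢
  linarith

/-- Local bound `π k ≤ 1 / (2σ)`. -/
lemma steinBinom_weight_le (n : ℕ) {p : ℝ} (hp : 0 < p) (hp1 : p < 1) (k : ℕ) :
    2 * Real.sqrt (n * p * (1 - p)) * steinBinomWeight n p k ≤ 1 := by
  have hq : 0 < 1 - p := by linarith
  rcases lt_or_ge n k with hk | hk
  · simp [steinBinomWeight, Nat.choose_eq_zero_of_lt hk]
  rcases Nat.eq_zero_or_pos n with rfl | hn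
  · simp
  obtain ⟨l, rfl⟩ := Nat.exists_eq_add_of_le hk
  set n := k + l with hndef
  have hn0 : (0 : ℝ) < n := by exact_mod_cast hn
  have hnkl : (n : ℝ) = k + l := by rw [hndef]; push_cast; ring
  have hπ := steinBinom_pos n hp hp1 hk
  have hs : 0 < Real.sqrt (n * p * (1 - p)) := Real.sqrt_pos.2 (by positivity)
  have hα : (0 : ℝ) < k + 1 / 2 := by positivity
  have hβ : (0 : ℝ) < l + 1 / 2 := by positivity
  have hN : (0 : ℝ) < n + 1 := by positivity
  rw [← Real.log_nonpos_iff (by positivity), Real.log_mul (by positivity) hπ.ne',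
    Real.log_mul two_ne_zero hs.ne', Real.log_sqrt (by positivity),
    Real.log_mul (by positivity) hq.ne', Real.log_mul hn0.ne' hp.ne']
  have hw : Real.log (steinBinomWeight n p k)
      = Real.log n.factorial - Real.log k.factorial - Real.log l.factorial
        + k * Real.log p + l * Real.log (1 - p) := by
    have hc : (0 : ℝ) < n.choose k := by exact_mod_cast Nat.choose_pos hk
    have hfac : (n.choose k : ℝ) * k.factorial * l.factorial = n.factorial := by
      have := Nat.choose_mul_factorial_mul_factorial hk
      rw [show n - k = l by omega] at this
      exact_mod_cast this
    unfold steinBinomWeight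
    rw [show n - k = l by omega, Real.log_mul (by positivity) (by positivity),
      Real.log_mul (by positivity) (by positivity), Real.log_pow, Real.log_pow, ← hfac,
      Real.log_mul (by positivity) (by positivity), Real.log_mul hc.ne' (by positivity)]
    ring
  -- the maximum of `p ^ α * q ^ β` is attained at `p = α / (α + β)`
  have gibbs : ∀ {a r : ℝ}, 0 < a → 0 < r →
      a * Real.log r ≤ a * Real.log a - a * Real.log (n + 1) + (r * (n + 1) - a) := by
    intro a r ha hr
    have h := Real.log_le_sub_one_of_pos (x := r * (n + 1) / a) (by positivity)
    rw [Real.log_div (by positivity) ha.ne', Real.log_mul hr.ne' hN.ne'] at h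
    have h2 := mul_le_mul_of_nonneg_left h ha.le
    have h3 : a * (r * (n + 1) / a - 1) = r * (n + 1) - a := by field_simp
    linarith
  have g1 := gibbs hα hp
  have g2 := gibbs hβ hq
  have f1 := steinBinom_factorial_lower k
  have f2 := steinBinom_factorial_lower l
  have f3 := steinBinom_factorial_upper (n := n) hn
  -- `(1 + 1/n) ^ (n + 1) ≥ e`
  have hlast : (n + 1) * Real.log n + 1 ≤ (n + 1) * Real.log (n + 1) := by
    have h := Real.log_le_sub_one_of_pos (x := (n : ℝ) / (n + 1)) (by positivity)
    rw [Real.log_div hn0.ne' hN.ne'] at h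
    have h2 := mul_le_mul_of_nonneg_left h hN.le
    have h3 : ((n : ℝ) + 1) * (n / (n + 1) - 1) = -1 := by field_simp; ring
    linarith
  rw [hw]
  have hL : (k + 1 / 2 : ℝ) * Real.log (n + 1) + (l + 1 / 2) * Real.log (n + 1)
      = (n + 1) * Real.log (n + 1) := by rw [hnkl]; ring
  linarith

/-- If `s (π k + π (k+1)) ≤ 1` for all `k`, then `s P[Y < k] P[Y ≥ k] ≤ q k π k`: the difference
of the two sides vanishes at `0` and `n + 1` and is unimodal. -/
lemma steinBinom_tail_le (n : ℕ) {p : ℝ} (hp : 0 < p) (hp1 : p < 1) {s : ℝ}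
    (hs : ∀ k, s * (steinBinomWeight n p k + steinBinomWeight n p (k + 1)) ≤ 1)
    {k : ℕ} (hk : k ≤ n + 1) :
    s * ((∑ j ∈ Finset.range k, steinBinomWeight n p j)
      * (1 - ∑ j ∈ Finset.range k, steinBinomWeight n p j))
      ≤ (1 - p) * k * steinBinomWeight n p k := by
  set π := steinBinomWeight n p with hπ
  set G : ℕ → ℝ := fun k => ∑ j ∈ Finset.range k, π j with hG
  have hGs : ∀ k, G (k + 1) = G k + π k := fun k => Finset.sum_range_succ _ _
  set c : ℕ → ℝ := fun k => n * p - k - s + s * (G k + G (k + 1)) with hc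
  have hanti : Antitone c := by
    refine antitone_nat_of_succ_le fun k => ?_
    have := hs k
    simp only [hc, hGs]
    push_cast
    linarith
  set E : ℕ → ℝ := fun k => (1 - p) * k * π k - s * (G k * (1 - G k)) with hE
  have hstep : ∀ k, E (k + 1) - E k = π k * c k := by
    intro k
    have h := steinBinom_succ n p k
    simp only [hE, hc, hGs]
    push_cast
    linear_combination h
  have hpos : ∀ j, 0 ≤ π j := steinBinom_nonneg n hp hp1
  have hE0 : E 0 = 0 := by simp [hE, hG]
  have hEn : E (n + 1) = 0 := by
    have h1 : G (n + 1) = 1 := steinBinom_sum n p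
    have h2 : π (n + 1) = 0 := by simp [hπ, steinBinomWeight]
    simp [hE, h1, h2]
  have key : 0 ≤ E k := by
    rcases le_total 0 (c k) with h | h
    · have : ∑ j ∈ Finset.range k, (E (j + 1) - E j) = E k - E 0 := Finset.sum_range_sub E k
      have h2 : 0 ≤ ∑ j ∈ Finset.range k, (E (j + 1) - E j) := by
        refine Finset.sum_nonneg fun j hj => ?_
        rw [hstep]
        exact mul_nonneg (hpos j) (h.trans (hanti (Finset.mem_range.1 hj).le))
      linarith
    · have : ∑ j ∈ Finset.Ico k (n + 1), (E (j + 1) - E j) = E (n + 1) - E k :=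
        Finset.sum_Ico_sub E hk
      have h2 : ∑ j ∈ Finset.Ico k (n + 1), (E (j + 1) - E j) ≤ 0 := by
        refine Finset.sum_nonpos fun j hj => ?_
        rw [hstep]
        exact mul_nonpos_of_nonneg_of_nonpos (hpos j)
          ((hanti (Finset.mem_Ico.1 hj).1).trans h)
      linarith
  simp only [hE] at key
  linarith

/-- `|P[A ∩ U] - P[A] P[U]| ≤ P[U] (1 - P[U])` with `U = {0, …, k-1}`, for a `[0,1]`-valued `a` in
place of the indicator of `A`. -/
lemma steinBinom_cov_le (n : ℕ) {p : ℝ} (hp : 0 < p) (hp1 : p < 1) {a : ℕ → ℝ}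
    (ha0 : ∀ j, 0 ≤ a j) (ha1 : ∀ j, a j ≤ 1) {k : ℕ} (hk : k ≤ n + 1) :
    |∑ j ∈ Finset.range k, steinBinomWeight n p j *
        (a j - ∑ i ∈ Finset.range (n + 1), a i * steinBinomWeight n p i)|
      ≤ (∑ j ∈ Finset.range k, steinBinomWeight n p j)
        * (1 - ∑ j ∈ Finset.range k, steinBinomWeight n p j) := by
  have hpos := steinBinom_nonneg n hp hp1
  have hsum := steinBinom_sum n p
  set π := steinBinomWeight n p
  rw [← Finset.sum_range_add_sum_Ico _ hk] at hsum ⊢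
  set x := ∑ j ∈ Finset.range k, a j * π j with hx
  set y := ∑ j ∈ Finset.Ico k (n + 1), a j * π j
  set G := ∑ j ∈ Finset.range k, π j with hG
  have e : ∑ j ∈ Finset.range k, π j * (a j - (x + y)) = x - G * (x + y) := by
    rw [hx, hG, Finset.sum_mul, ← Finset.sum_sub_distrib]
    exact Finset.sum_congr rfl fun j _ => by ring
  have hx0 : 0 ≤ x := Finset.sum_nonneg fun j _ => mul_nonneg (ha0 j) (hpos j)
  have hy0 : 0 ≤ y := Finset.sum_nonneg fun j _ => mul_nonneg (ha0 j) (hpos j)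
  have hx1 : x ≤ G :=
    Finset.sum_le_sum fun j _ => mul_le_of_le_one_left (hpos j) (ha1 j)
  have hy1 : y ≤ 1 - G := by
    rw [← hsum, add_sub_cancel_left]
    exact Finset.sum_le_sum fun j _ => mul_le_of_le_one_left (hpos j) (ha1 j)
  rw [e, abs_le]
  constructor <;> nlinarith

open scoped Classical in
/-- Lemma 5.1: for any `A ⊆ ℤ` there is a solution `g` of the Stein equation
for `Bi(n,p)` (with the convention that the right-hand side vanishes outside
`{0, …, n}`) satisfying `‖g‖ ≤ min(1, (npq)^{-1/2})`. -/
theorem stmt13 (n : ℕ) (p : ℝ) (hp : 0 < p) (hp1 : p < 1) (A : Set ℤ) :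
    ∃ g : ℤ → ℝ,
      (∀ z : ℤ, (1 - p) * (z : ℝ) * g (z - 1) - p * ((n : ℝ) - (z : ℝ)) * g z =
        (if 0 ≤ z ∧ z ≤ (n : ℤ) then (1 : ℝ) else 0) *
          ((if z ∈ A then (1 : ℝ) else 0) -
            ∑ k ∈ Finset.range (n + 1),
              (if (k : ℤ) ∈ A then (n.choose k : ℝ) * p ^ k * (1 - p) ^ (n - k)
                else 0))) ∧
      ∀ z : ℤ, |g z| ≤ min 1 (Real.sqrt ((n : ℝ) * p * (1 - p)))⁻¹ := by
  have hq : 0 < 1 - p := by linarith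
  set a : ℕ → ℝ := fun k => if (k : ℤ) ∈ A then 1 else 0 with ha
  have ha0 : ∀ j, 0 ≤ a j := fun j => by simp only [ha]; split_ifs <;> norm_num
  have ha1 : ∀ j, a j ≤ 1 := fun j => by simp only [ha]; split_ifs <;> norm_num
  set π := steinBinomWeight n p with hπ
  have hP : (∑ k ∈ Finset.range (n + 1),
      (if (k : ℤ) ∈ A then (n.choose k : ℝ) * p ^ k * (1 - p) ^ (n - k) else 0))
      = ∑ i ∈ Finset.range (n + 1), a i * π i := by
    refine Finset.sum_congr rfl fun i _ => ?_
    simp only [ha, hπ, steinBinomWeight]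
    split_ifs <;> simp
  rw [hP]
  set P := ∑ i ∈ Finset.range (n + 1), a i * π i with hPdef
  set T : ℕ → ℝ := fun k => ∑ j ∈ Finset.range k, π j * (a j - P) with hT
  have hTs : ∀ k, T (k + 1) = T k + π k * (a k - P) := fun k => Finset.sum_range_succ _ _
  have hTn : T (n + 1) = 0 := by
    have h1 : T (n + 1) = P - P * ∑ j ∈ Finset.range (n + 1), π j := by
      simp only [hT]
      rw [Finset.mul_sum, hPdef, ← Finset.sum_sub_distrib]
      exact Finset.sum_congr rfl fun j _ => by ring
    rw [h1, hπ, steinBinom_sum]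
    ring
  have hsucc := steinBinom_succ n p
  rw [← hπ] at hsucc
  set g : ℤ → ℝ := fun z => if 0 ≤ z ∧ z < n then
    -T (z.toNat + 1) / ((1 - p) * ((z.toNat : ℝ) + 1) * π (z.toNat + 1)) else 0 with hg
  have hgk : ∀ k : ℕ, k < n →
      g k = -T (k + 1) / ((1 - p) * ((k : ℝ) + 1) * π (k + 1)) := by
    intro k hk
    simp only [hg]
    rw [if_pos ⟨by omega, by exact_mod_cast hk⟩]
    simp
  have hgout : ∀ z : ℤ, ¬ (0 ≤ z ∧ z < n) → g z = 0 := fun z hz => if_neg hz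
  have hDpos : ∀ k : ℕ, k < n → 0 < (1 - p) * ((k : ℝ) + 1) * π (k + 1) := by
    intro k hk
    have := steinBinom_pos n hp hp1 (k := k + 1) hk
    positivity
  refine ⟨g, fun z => ?_, fun z => ?_⟩
  · by_cases hz : 0 ≤ z ∧ z ≤ n
    · rw [if_pos hz, one_mul]
      obtain ⟨k, rfl⟩ := Int.eq_ofNat_of_zero_le hz.1
      have hkn : k ≤ n := by omega
      have hπk : 0 < π k := steinBinom_pos n hp hp1 hkn
      have A1 : p * ((n : ℝ) - k) * π k * g k = -T (k + 1) := by
        rcases hkn.lt_or_eq with h | h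
        · rw [← hsucc, hgk k h, mul_div_cancel₀ _ (hDpos k h).ne']
        · subst h
          simp [hTn]
      have A2 : (1 - p) * (k : ℝ) * π k * g ((k : ℤ) - 1) = -T k := by
        rcases k with _ | m
        · simp [hT]
        · have h : m < n := hkn
          rw [show ((m + 1 : ℕ) : ℤ) - 1 = (m : ℤ) by push_cast; ring, hgk m h]
          push_cast
          rw [mul_div_cancel₀ _ (hDpos m h).ne']
      apply mul_left_cancel₀ hπk.ne'
      have h3 := hTs k
      change _ = π k * (a k - P)
      push_cast
      linear_combination A2 - A1 + h3
    · -- the boundary case `z = n + 1` needs `g n = 0`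
      rw [if_neg hz, hgout z (by omega), hgout (z - 1) (by omega)]
      ring
  · by_cases hz : 0 ≤ z ∧ z < n
    · obtain ⟨k, rfl⟩ := Int.eq_ofNat_of_zero_le hz.1
      have hk : k < n := by omega
      have hD := hDpos k hk
      have hcov := steinBinom_cov_le n hp hp1 ha0 ha1 (k := k + 1) (by omega)
      have hpos := steinBinom_nonneg n hp hp1
      have hn0 : (0 : ℝ) < n := by exact_mod_cast (by omega : 0 < n)
      have hσ : 0 < Real.sqrt (n * p * (1 - p)) := Real.sqrt_pos.2 (by positivity)
      have t1 := steinBinom_tail_le n hp hp1 (s := 1) (k := k + 1) (fun j => by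
        rw [one_mul]
        rcases lt_or_ge j n with hj | hj
        · rw [← steinBinom_sum n p]
          have hsub : ({j, j + 1} : Finset ℕ) ⊆ Finset.range (n + 1) := by
            intro i hi
            simp only [Finset.mem_insert, Finset.mem_singleton] at hi
            rw [Finset.mem_range]
            omega
          have := Finset.sum_le_sum_of_subset_of_nonneg hsub
            (f := steinBinomWeight n p) (fun i _ _ => hpos i)
          rwa [Finset.sum_pair (by omega)] at this
        · have h0 : steinBinomWeight n p (j + 1) = 0 := by
            simp [steinBinomWeight, Nat.choose_eq_zero_of_lt (show n < j + 1 by omega)]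
          rw [h0, add_zero]
          rcases hj.eq_or_lt with hj | hj
          · rw [← steinBinom_sum n p]
            exact Finset.single_le_sum (f := steinBinomWeight n p) (fun i _ => hpos i)
              (Finset.mem_range.2 (by omega))
          · simp [steinBinomWeight, Nat.choose_eq_zero_of_lt hj]) (by omega)
      have t2 := steinBinom_tail_le n hp hp1 (s := Real.sqrt (n * p * (1 - p))) (k := k + 1)
        (fun j => by
          have h1 := steinBinom_weight_le n hp hp1 j
          have h2 := steinBinom_weight_le n hp hp1 (j + 1)
          linarith) (by omega)
      push_cast at t1 t2
      change |T (k + 1)| ≤ _ at hcov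
      change |g (k : ℤ)| ≤ _
      rw [hgk k hk, abs_div, abs_neg, abs_of_pos hD, le_min_iff, div_le_iff₀ hD, div_le_iff₀ hD]
      constructor
      · linarith
      · rw [inv_mul_eq_div, le_div_iff₀ hσ, mul_comm]
        exact (mul_le_mul_of_nonneg_left hcov hσ.le).trans t2
    · rw [hgout z hz, abs_zero]
      positivity
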